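/- arXiv:2502.04306 — 6 statements merged into one kernel-verified Lean document; each statement's English description precedes it below -/
import Mathlib

section
/- For all real numbers a, b and all real numbers x₁, x₂ with 0 < x₁ < x₂ and a·x₂ ≤ 1, one has x₁·σ(−a·x₁ + b) < x₂·σ(−a·x₂ + b); in other words, F(t) = t·σ(−a·t + b) is strictly monotonically increasing on the set {x : 0 < x and a·x ≤ 1}. -/
/-- The logistic (sigmoid) function `σ(t) = (1 + exp (−t))⁻¹`. -/
noncomputable def logistic (t : ℝ) : ℝ := (1 + Real.exp (-t))⁻¹

/-- For all real `a, b` and all real `x₁, x₂` with `0 < x₁ < x₂` and `a·x₂ ≤ 1`, one has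
`x₁·σ(−a·x₁ + b) < x₂·σ(−a·x₂ + b)`; i.e. `F(t) = t·σ(−a·t + b)` is strictly
monotonically increasing on `{x : 0 < x ∧ a·x ≤ 1}`. -/
theorem stmt_2 (a b x₁ x₂ : ℝ) (hx₁ : 0 < x₁) (hx₁₂ : x₁ < x₂) (hax₂ : a * x₂ ≤ 1) :
    x₁ * logistic (-a * x₁ + b) < x₂ * logistic (-a * x₂ + b) := by
  have hx₂ : 0 < x₂ := hx₁.trans hx₁₂
  have key : x₁ * Real.exp (-(-a * x₂ + b)) ≤ x₂ * Real.exp (-(-a * x₁ + b)) := by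
    have h1 : Real.exp (-(-a * x₁ + b)) =
        Real.exp (a * (x₁ - x₂)) * Real.exp (-(-a * x₂ + b)) := by
      rw [← Real.exp_add]; ring_nf
    have h2 := Real.add_one_le_exp (a * (x₁ - x₂))
    have h3 : x₁ ≤ x₂ * Real.exp (a * (x₁ - x₂)) := by
      have h4 := mul_le_mul_of_nonneg_left h2 hx₂.le
      nlinarith [mul_nonneg (sub_nonneg.2 hax₂) (sub_nonneg.2 hx₁₂.le)]
    rw [h1, ← mul_assoc]
    exact mul_le_mul_of_nonneg_right h3 (Real.exp_pos _).le
  unfold logistic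
  rw [← div_eq_mul_inv, ← div_eq_mul_inv, div_lt_div_iff₀ (by positivity) (by positivity)]
  linarith
end

section
/- Let c, r be real numbers and let f be strictly increasing on [0,1] with 0 < f(s) for all s ∈ [0,1]. Then for all s₁, s₂ ∈ [0,1] with s₁ < s₂ and r·f(s₂) ≤ 1, one has f(s₁)·σ(c − f(s₁)·r) < f(s₂)·σ(c − f(s₂)·r). -/
/-- Let `c, r` be real and `f` strictly increasing on `[0,1]` with `0 < f(s)` for all
`s ∈ [0,1]`. Then for all `s₁, s₂ ∈ [0,1]` with `s₁ < s₂` and `r·f(s₂) ≤ 1`, one has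
`f(s₁)·σ(c − f(s₁)·r) < f(s₂)·σ(c − f(s₂)·r)`. -/
theorem stmt_3 (c r : ℝ) (f : ℝ → ℝ)
    (hf_mono : StrictMonoOn f (Set.Icc (0:ℝ) 1))
    (hf_pos : ∀ s ∈ Set.Icc (0:ℝ) 1, 0 < f s)
    (s₁ s₂ : ℝ) (hs₁ : s₁ ∈ Set.Icc (0:ℝ) 1) (hs₂ : s₂ ∈ Set.Icc (0:ℝ) 1)
    (hlt : s₁ < s₂) (hr : r * f s₂ ≤ 1) :
    f s₁ * logistic (c - f s₁ * r) < f s₂ * logistic (c - f s₂ * r) := by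
  have hab : f s₁ < f s₂ := hf_mono hs₁ hs₂ hlt
  have ha := hf_pos s₁ hs₁
  generalize f s₁ = a at *
  generalize f s₂ = b at *
  have hb : 0 < b := ha.trans hab
  have e1 := Real.add_one_le_exp (-((b - a) * r))
  have h1 : a ≤ b * Real.exp (-((b - a) * r)) := by
    have h2 := mul_le_mul_of_nonneg_left e1 hb.le
    nlinarith [mul_nonneg (sub_nonneg.2 hab.le) (sub_nonneg.2 hr)]
  have h3 : a * Real.exp (-(c - b * r)) ≤ b * Real.exp (-(c - a * r)) := by
    have h4 : Real.exp (-(c - a * r))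
        = Real.exp (-((b - a) * r)) * Real.exp (-(c - b * r)) := by
      rw [← Real.exp_add]; congr 1; ring
    rw [h4, ← mul_assoc]
    exact mul_le_mul_of_nonneg_right h1 (Real.exp_pos _).le
  unfold logistic
  rw [← div_eq_mul_inv, ← div_eq_mul_inv, div_lt_div_iff₀ (by positivity) (by positivity)]
  linarith
end

section
/- Let c, r be real numbers and let f be strictly increasing on [0,1] with f(s) < 1 for all s ∈ [0,1]. Then for all s₁, s₂ ∈ [0,1] with s₁ < s₂ and r·(1 − f(s₁)) ≥ −1, one has (1 − f(s₁))·σ((1 − f(s₁))·r − c) > (1 − f(s₂))·σ((1 − f(s₂))·r − c). -/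
/-- Let `c, r` be real and `f` strictly increasing on `[0,1]` with `f(s) < 1` for all
`s ∈ [0,1]`. Then for all `s₁, s₂ ∈ [0,1]` with `s₁ < s₂` and `r·(1 − f(s₁)) ≥ −1`,
one has `(1 − f(s₁))·σ((1 − f(s₁))·r − c) > (1 − f(s₂))·σ((1 − f(s₂))·r − c)`. -/
theorem stmt_4 (c r : ℝ) (f : ℝ → ℝ)
    (hf_mono : StrictMonoOn f (Set.Icc (0:ℝ) 1))
    (hf_lt : ∀ s ∈ Set.Icc (0:ℝ) 1, f s < 1)
    (s₁ s₂ : ℝ) (hs₁ : s₁ ∈ Set.Icc (0:ℝ) 1) (hs₂ : s₂ ∈ Set.Icc (0:ℝ) 1)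
    (hlt : s₁ < s₂) (hr : r * (1 - f s₁) ≥ -1) :
    (1 - f s₁) * logistic ((1 - f s₁) * r - c)
      > (1 - f s₂) * logistic ((1 - f s₂) * r - c) := by
  have hfm := hf_mono hs₁ hs₂ hlt
  have h2 := hf_lt s₂ hs₂
  obtain ⟨a, ha⟩ : ∃ a, a = 1 - f s₁ := ⟨_, rfl⟩
  obtain ⟨b, hb⟩ : ∃ b, b = 1 - f s₂ := ⟨_, rfl⟩
  rw [← ha, ← hb]
  rw [← ha] at hr
  have hab : b < a := by linarith
  have hb0 : 0 < b := by linarith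
  have key : b * Real.exp (-(a * r - c)) ≤ a * Real.exp (-(b * r - c)) := by
    have e1 : Real.exp (-(b * r - c))
        = Real.exp (-(a * r - c)) * Real.exp ((a - b) * r) := by
      rw [← Real.exp_add]
      congr 1
      ring
    have e2 : b ≤ a * Real.exp ((a - b) * r) := by
      have h3 := Real.add_one_le_exp ((a - b) * r)
      have h4 : a * ((a - b) * r + 1) ≤ a * Real.exp ((a - b) * r) :=
        mul_le_mul_of_nonneg_left h3 (by linarith)
      have h5 : (a - b) * (-1) ≤ (a - b) * (r * a) :=
        mul_le_mul_of_nonneg_left hr (by linarith)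
      linarith
    have h6 := mul_le_mul_of_nonneg_right e2 (Real.exp_pos (-(a * r - c))).le
    rw [e1]
    linarith
  unfold logistic
  rw [← div_eq_mul_inv, ← div_eq_mul_inv, gt_iff_lt,
    div_lt_div_iff₀ (by positivity) (by positivity)]
  linarith
end

section
/- Under the stated hypotheses, if W is nonempty, then for all s₁, s₂ ∈ [0,1] with s₁ < s₂ and r·f(s₂) ≤ 1, one has g(s₁) < g(s₂), where g(s) = Σ_{i ∈ W} p(i)·d(s, s_l(i))·f(s)·σ(c(i) − f(s)·r); that is, the winner-side contribution to the per-sample influence is strictly increasing in the sample's score on the region where r·f(s) ≤ 1. -/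
theorem mul_logistic_le (a b r c : ℝ) (ha : 0 < a) (hab : a < b) (hr : r * b ≤ 1) :
    a * logistic (c - a * r) ≤ b * logistic (c - b * r) := by
  unfold logistic
  rw [← div_eq_mul_inv, ← div_eq_mul_inv, div_le_div_iff₀ (by positivity) (by positivity)]
  have hE := Real.exp_pos (-(c - b * r))
  have h1 : Real.exp (-(c - a * r)) =
      Real.exp (-(c - b * r)) * Real.exp (-((b - a) * r)) := by
    rw [← Real.exp_add]; congr 1; ring
  have h2 := Real.add_one_le_exp (-((b - a) * r))
  have h3 : a ≤ b * Real.exp (-((b - a) * r)) := by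
    have h4 := mul_le_mul_of_nonneg_left h2 (ha.trans hab).le
    have h5 := mul_le_mul_of_nonneg_left hr (sub_pos.2 hab).le
    linarith
  have h6 := mul_le_mul_of_nonneg_left h3 hE.le
  rw [h1]
  linarith

/-- Winner-side contribution to the per-sample influence is strictly increasing in the
sample's score on the region where `r·f(s) ≤ 1`. Here `W` is a nonempty finite index set
of preference pairs in which `z` is the winner, with loser scores `sl`, loser implicit
rewards `c`, and strictly positive base weights `p`; `f` is strictly increasing and
strictly positive on `[0,1]`, and `d` is strictly monotonically increasing with respect
to `x − y` with `0 ≤ d ≤ 1` on `[0,1]²`. -/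
theorem stmt_5 {ι : Type*} (r : ℝ) (f : ℝ → ℝ) (d : ℝ → ℝ → ℝ)
    (hf_mono : StrictMonoOn f (Set.Icc (0:ℝ) 1))
    (hf_pos : ∀ s ∈ Set.Icc (0:ℝ) 1, 0 < f s)
    (hd_mono : ∀ x ∈ Set.Icc (0:ℝ) 1, ∀ y ∈ Set.Icc (0:ℝ) 1,
      ∀ x' ∈ Set.Icc (0:ℝ) 1, ∀ y' ∈ Set.Icc (0:ℝ) 1,
        x - y < x' - y' → d x y < d x' y')
    (hd_range : ∀ x ∈ Set.Icc (0:ℝ) 1, ∀ y ∈ Set.Icc (0:ℝ) 1,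
      d x y ∈ Set.Icc (0:ℝ) 1)
    (W : Finset ι) (hW : W.Nonempty)
    (sl : ι → ℝ) (hsl : ∀ i ∈ W, sl i ∈ Set.Icc (0:ℝ) 1)
    (c : ι → ℝ) (p : ι → ℝ) (hp : ∀ i ∈ W, 0 < p i)
    (s₁ s₂ : ℝ) (hs₁ : s₁ ∈ Set.Icc (0:ℝ) 1) (hs₂ : s₂ ∈ Set.Icc (0:ℝ) 1)
    (hlt : s₁ < s₂) (hr : r * f s₂ ≤ 1) :
    ∑ i ∈ W, p i * d s₁ (sl i) * f s₁ * logistic (c i - f s₁ * r)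
      < ∑ i ∈ W, p i * d s₂ (sl i) * f s₂ * logistic (c i - f s₂ * r) := by
  refine Finset.sum_lt_sum_of_nonempty hW fun i hi => ?_
  have hA := mul_logistic_le (f s₁) (f s₂) r (c i) (hf_pos _ hs₁) (hf_mono hs₁ hs₂ hlt) hr
  have hB : 0 < f s₂ * logistic (c i - f s₂ * r) :=
    mul_pos (hf_pos _ hs₂) (by unfold logistic; positivity)
  have hd := hd_mono _ hs₁ _ (hsl i hi) _ hs₂ _ (hsl i hi) (by linarith)
  have hd0 := (hd_range _ hs₁ _ (hsl i hi)).1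
  have h1 := mul_le_mul_of_nonneg_left hA hd0
  have h2 := mul_lt_mul_of_pos_right hd hB
  have h3 := mul_lt_mul_of_pos_left (h1.trans_lt h2) (hp i hi)
  simpa only [mul_assoc] using h3
end

section
/- Under the stated hypotheses, if L is nonempty, then for all s₁, s₂ ∈ [0,1] with s₁ < s₂ and r·(1 − f(s₁)) ≥ −1, one has h(s₁) > h(s₂), where h(s) = Σ_{j ∈ L} p(j)·d(s_w(j), s)·(1 − f(s))·σ((1 − f(s))·r − c′(j)); that is, the loser-side contribution to the per-sample influence is strictly decreasing in the sample's score on the region where r·(1 − f(s)) ≥ −1. -/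
theorem aux_logistic (u v r c : ℝ) (hv : 0 < v) (huv : v < u) (hr : r * u ≥ -1) :
    v * logistic (v * r - c) ≤ u * logistic (u * r - c) := by
  unfold logistic
  have h1 : Real.exp (-(v * r - c)) = Real.exp (-(u * r - c)) * Real.exp ((u - v) * r) := by
    rw [← Real.exp_add]; congr 1; ring
  have h2 := Real.add_one_le_exp ((u - v) * r)
  have hE := Real.exp_pos (-(u * r - c))
  have hF := Real.exp_pos (-(v * r - c))
  have h3 : v ≤ u * Real.exp ((u - v) * r) := by
    have := mul_le_mul_of_nonneg_left h2 (hv.trans huv).le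
    nlinarith
  rw [← div_eq_mul_inv, ← div_eq_mul_inv, div_le_div_iff₀ (by positivity) (by positivity), h1]
  have := mul_le_mul_of_nonneg_left h3 hE.le
  nlinarith

/-- Loser-side contribution to the per-sample influence is strictly decreasing in the
sample's score on the region where `r·(1 − f(s)) ≥ −1`. Here `L` is a nonempty finite
index set of preference pairs in which `z` is the loser, with winner scores `sw`, winner
implicit rewards `c'`, and strictly positive base weights `p`; `f` is strictly increasing
on `[0,1]` with values `< 1`, and `d` is strictly monotonically increasing with respect
to `x − y` with `0 ≤ d ≤ 1` on `[0,1]²`. -/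
theorem stmt_6 {ι : Type*} (r : ℝ) (f : ℝ → ℝ) (d : ℝ → ℝ → ℝ)
    (hf_mono : StrictMonoOn f (Set.Icc (0:ℝ) 1))
    (hf_lt : ∀ s ∈ Set.Icc (0:ℝ) 1, f s < 1)
    (hd_mono : ∀ x ∈ Set.Icc (0:ℝ) 1, ∀ y ∈ Set.Icc (0:ℝ) 1,
      ∀ x' ∈ Set.Icc (0:ℝ) 1, ∀ y' ∈ Set.Icc (0:ℝ) 1,
        x - y < x' - y' → d x y < d x' y')
    (hd_range : ∀ x ∈ Set.Icc (0:ℝ) 1, ∀ y ∈ Set.Icc (0:ℝ) 1,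
      d x y ∈ Set.Icc (0:ℝ) 1)
    (L : Finset ι) (hL : L.Nonempty)
    (sw : ι → ℝ) (hsw : ∀ j ∈ L, sw j ∈ Set.Icc (0:ℝ) 1)
    (c' : ι → ℝ) (p : ι → ℝ) (hp : ∀ j ∈ L, 0 < p j)
    (s₁ s₂ : ℝ) (hs₁ : s₁ ∈ Set.Icc (0:ℝ) 1) (hs₂ : s₂ ∈ Set.Icc (0:ℝ) 1)
    (hlt : s₁ < s₂) (hr : r * (1 - f s₁) ≥ -1) :
    ∑ j ∈ L, p j * d (sw j) s₁ * (1 - f s₁) * logistic ((1 - f s₁) * r - c' j)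
      > ∑ j ∈ L, p j * d (sw j) s₂ * (1 - f s₂) * logistic ((1 - f s₂) * r - c' j) := by
  have hv : 0 < 1 - f s₂ := by linarith [hf_lt s₂ hs₂]
  have huv : 1 - f s₂ < 1 - f s₁ := by linarith [hf_mono hs₁ hs₂ hlt]
  apply Finset.sum_lt_sum_of_nonempty hL
  intro j hj
  have hd := hd_mono _ (hsw j hj) _ hs₂ _ (hsw j hj) _ hs₁ (by linarith)
  have hd0 := (hd_range _ (hsw j hj) _ hs₂).1
  have hA := aux_logistic _ _ r (c' j) hv huv hr
  have hl : 0 < logistic ((1 - f s₂) * r - c' j) := by unfold logistic; positivity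
  have hB := mul_pos hv hl
  have hpj := hp j hj
  rw [mul_assoc, mul_assoc (p j * d (sw j) s₁)]
  calc _ < p j * d (sw j) s₁ * ((1 - f s₂) * logistic ((1 - f s₂) * r - c' j)) :=
        mul_lt_mul_of_pos_right (mul_lt_mul_of_pos_left hd hpj) hB
    _ ≤ _ := mul_le_mul_of_nonneg_left hA (mul_nonneg hpj.le (hd0.trans hd.le))
end

section
/- Suppose W and L are not both empty. Then for all s₁, s₂ ∈ [0,1] with s₁ < s₂, r·f(s₂) ≤ 1, and r·(1 − f(s₁)) ≥ −1 (i.e. −(1 − f(s₁))⁻¹ ≤ r ≤ f(s₂)⁻¹), one has I(s₁) < I(s₂); that is, the per-sample influence I(z) is strictly monotonically increasing with the score s_z on the region where −(1 − f(s_z))⁻¹ ≤ r ≤ f(s_z)⁻¹. -/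
theorem logistic_pos_aux (t : ℝ) : 0 < logistic t := by
  unfold logistic; positivity

theorem logistic_key {a b r : ℝ} (c : ℝ) (ha : 0 < a) (hab : a < b) (hr : r * b ≤ 1) :
    a * logistic (c - a * r) ≤ b * logistic (c - b * r) := by
  unfold logistic
  have hb : 0 < b := ha.trans hab
  have h1 : (a - b) * r + 1 ≤ Real.exp ((a - b) * r) := Real.add_one_le_exp _
  have h2 : a ≤ b * Real.exp ((a - b) * r) := by
    have h3 := mul_le_mul_of_nonneg_left h1 hb.le
    nlinarith [mul_nonneg (sub_pos.2 hab).le (sub_nonneg.2 hr)]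
  have h4 : Real.exp (-(c - a * r)) = Real.exp ((a - b) * r) * Real.exp (-(c - b * r)) := by
    rw [← Real.exp_add]; congr 1; ring
  rw [← div_eq_mul_inv, ← div_eq_mul_inv, div_le_div_iff₀ (by positivity) (by positivity), h4]
  have h5 := mul_le_mul_of_nonneg_right h2 (Real.exp_pos (-(c - b * r))).le
  nlinarith

theorem term_key {p d₁ d₂ a b x y : ℝ} (hp : 0 < p) (hd : d₁ < d₂) (hd₁ : 0 ≤ d₁)
    (hb : 0 < b) (hy : 0 < y) (h : a * x ≤ b * y) :
    p * d₁ * a * x < p * d₂ * b * y := by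
  have h1 : d₁ * (a * x) ≤ d₁ * (b * y) := mul_le_mul_of_nonneg_left h hd₁
  have h2 : d₁ * (b * y) < d₂ * (b * y) := mul_lt_mul_of_pos_right hd (mul_pos hb hy)
  have h3 := mul_lt_mul_of_pos_left (h1.trans_lt h2) hp
  linarith

/-- Finite-dataset form of Theorem 1 (per-sample influence monotonicity): with `W` the
finite set of pairs where `z` wins and `L` the finite set of pairs where `z` loses
(not both empty), with strictly positive base weights, the per-sample influence
`I(s) = Σ_{i ∈ W} p(i)·d(s, s_l(i))·f(s)·σ(c(i) − f(s)·r)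
      − Σ_{j ∈ L} p(j)·d(s_w(j), s)·(1 − f(s))·σ((1 − f(s))·r − c′(j))`
is strictly increasing in the score `s` on the region where
`−(1 − f(s))⁻¹ ≤ r ≤ f(s)⁻¹` (expressed as `r·f(s₂) ≤ 1` and `r·(1 − f(s₁)) ≥ −1`). -/
theorem stmt_7 {ι κ : Type*} (r : ℝ) (f : ℝ → ℝ) (d : ℝ → ℝ → ℝ)
    (hf_mono : StrictMonoOn f (Set.Icc (0:ℝ) 1))
    (hf_pos : ∀ s ∈ Set.Icc (0:ℝ) 1, 0 < f s)
    (hf_lt : ∀ s ∈ Set.Icc (0:ℝ) 1, f s < 1)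
    (hd_mono : ∀ x ∈ Set.Icc (0:ℝ) 1, ∀ y ∈ Set.Icc (0:ℝ) 1,
      ∀ x' ∈ Set.Icc (0:ℝ) 1, ∀ y' ∈ Set.Icc (0:ℝ) 1,
        x - y < x' - y' → d x y < d x' y')
    (hd_range : ∀ x ∈ Set.Icc (0:ℝ) 1, ∀ y ∈ Set.Icc (0:ℝ) 1,
      d x y ∈ Set.Icc (0:ℝ) 1)
    (W : Finset ι) (L : Finset κ) (hWL : W.Nonempty ∨ L.Nonempty)
    (sl : ι → ℝ) (hsl : ∀ i ∈ W, sl i ∈ Set.Icc (0:ℝ) 1)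
    (c : ι → ℝ) (p : ι → ℝ) (hp : ∀ i ∈ W, 0 < p i)
    (sw : κ → ℝ) (hsw : ∀ j ∈ L, sw j ∈ Set.Icc (0:ℝ) 1)
    (c' : κ → ℝ) (q : κ → ℝ) (hq : ∀ j ∈ L, 0 < q j)
    (s₁ s₂ : ℝ) (hs₁ : s₁ ∈ Set.Icc (0:ℝ) 1) (hs₂ : s₂ ∈ Set.Icc (0:ℝ) 1)
    (hlt : s₁ < s₂) (hr₂ : r * f s₂ ≤ 1) (hr₁ : r * (1 - f s₁) ≥ -1) :
    (∑ i ∈ W, p i * d s₁ (sl i) * f s₁ * logistic (c i - f s₁ * r))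
        - ∑ j ∈ L, q j * d (sw j) s₁ * (1 - f s₁) * logistic ((1 - f s₁) * r - c' j)
      < (∑ i ∈ W, p i * d s₂ (sl i) * f s₂ * logistic (c i - f s₂ * r))
        - ∑ j ∈ L, q j * d (sw j) s₂ * (1 - f s₂) * logistic ((1 - f s₂) * r - c' j) := by
  have hf := hf_mono hs₁ hs₂ hlt
  have hW : ∀ i ∈ W, p i * d s₁ (sl i) * f s₁ * logistic (c i - f s₁ * r)
      < p i * d s₂ (sl i) * f s₂ * logistic (c i - f s₂ * r) := fun i hi =>
    term_key (hp i hi) (hd_mono _ hs₁ _ (hsl i hi) _ hs₂ _ (hsl i hi) (by linarith))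
      (hd_range _ hs₁ _ (hsl i hi)).1 (hf_pos _ hs₂) (logistic_pos_aux _)
      (logistic_key _ (hf_pos _ hs₁) hf hr₂)
  have hL : ∀ j ∈ L, q j * d (sw j) s₂ * (1 - f s₂) * logistic ((1 - f s₂) * r - c' j)
      < q j * d (sw j) s₁ * (1 - f s₁) * logistic ((1 - f s₁) * r - c' j) := by
    intro j hj
    refine term_key (hq j hj) (hd_mono _ (hsw j hj) _ hs₂ _ (hsw j hj) _ hs₁ (by linarith))
      (hd_range _ (hsw j hj) _ hs₂).1 (sub_pos.2 (hf_lt _ hs₁)) (logistic_pos_aux _) ?_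
    have h := logistic_key (a := 1 - f s₂) (b := 1 - f s₁) (r := -r) (-c' j)
      (sub_pos.2 (hf_lt _ hs₂)) (by linarith) (by linarith)
    have e : ∀ t : ℝ, -c' j - t * -r = t * r - c' j := fun t => by ring
    rwa [e, e] at h
  have hW' := Finset.sum_le_sum fun i hi => (hW i hi).le
  have hL' := Finset.sum_le_sum fun j hj => (hL j hj).le
  rcases hWL with h | h
  · have := Finset.sum_lt_sum_of_nonempty h hW
    linarith
  · have := Finset.sum_lt_sum_of_nonempty h hL
    linarith
end
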